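/- arXiv:math/0412264 — 2 statements merged into one kernel-verified Lean document; each statement's English description precedes it below -/
import Mathlib

section
/- Given a graph G and an edge e of G, there is a long exact sequence ... → H^{i,j}(G) → H^{i,j}(G−e) → H^{i,j}(G/e) → H^{i+1,j}(G) → ... of graph cohomology groups, categorifying the deletion-contraction rule. -/
/-- A finite multigraph (possibly with loops and multiple edges), with
vertex type `V` and edges indexed by `Fin n`, edge `e` having endpoints `ends e`. -/
structure OGraph where
  V : Type
  [finV : Fintype V]
  n : ℕ
  ends : Fin n → Sym2 V

attribute [instance] OGraph.finV

namespace OGraph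

variable (G : OGraph)

/-- Two vertices are related if some edge in `s` joins them. -/
def rel (s : Finset (Fin G.n)) (u v : G.V) : Prop := ∃ e ∈ s, G.ends e = s(u, v)

/-- The set of connected components of the spanning subgraph `[G:s]`. -/
def Comp (s : Finset (Fin G.n)) : Type := Quot (G.rel s)

/-- `k(s)`: the number of connected components of the spanning subgraph `[G:s]`. -/
noncomputable def ncomp (s : Finset (Fin G.n)) : ℕ := Nat.card (G.Comp s)

/-- The number of proper colorings of `G` with `m` colors: the value `P_G(m)` of
the chromatic polynomial at the natural number `m`. -/
noncomputable def chromatic (m : ℕ) : ℕ :=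
  Nat.card {c : G.V → Fin m // ∀ e u v, G.ends e = s(u, v) → c u ≠ c v}

end OGraph

namespace OGraph

noncomputable instance finiteQuot {V : Type} [Finite V] (r : V → V → Prop) :
    Fintype (Quot r) :=
  letI : Finite (Quot r) :=
    Finite.of_surjective (Quot.mk r) fun q => Quot.inductionOn q fun v => ⟨v, rfl⟩
  Fintype.ofFinite _

/-- The graph `G − e` obtained from `G` by deleting the edge `e`; the ordering of
the remaining edges is inherited from `G`. -/
def delG (V : Type) [Fintype V] {n : ℕ} (ends : Fin (n + 1) → Sym2 V)
    (e : Fin (n + 1)) : OGraph :=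
  ⟨V, n, fun k => ends (e.succAbove k)⟩

/-- The graph `G / e` obtained from `G` by contracting the edge `e` (identifying its
two endpoints and removing `e`); the ordering of the remaining edges is inherited. -/
noncomputable def ctrG (V : Type) [Fintype V] {n : ℕ} (ends : Fin (n + 1) → Sym2 V)
    (e : Fin (n + 1)) : OGraph :=
  ⟨Quot (fun u v : V => ends e = s(u, v)), n,
    fun k => (ends (e.succAbove k)).map (Quot.mk _)⟩

end OGraph

namespace OGraph

/-- The map on quotients induced by an implication of relations. -/
def qmap {V : Type} {r r' : V → V → Prop} (h : ∀ u v, r u v → r' u v) :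
    Quot r → Quot r' :=
  Quot.lift (Quot.mk r') fun u v huv => Quot.sound (h u v huv)

variable (G : OGraph)

/-- An enhanced state: a subset `s` of the edges together with an assignment of a
color (`1` or `x`; a component is "colored `x`" when the predicate holds) to each
connected component of the spanning subgraph `[G:s]`. -/
abbrev EState := Σ s : Finset (Fin G.n), (G.Comp s → Prop)

/-- `j(S)`: the number of components colored `x` in the enhanced state `S`. -/
noncomputable def jdeg (S : G.EState) : ℕ := Nat.card {k : G.Comp S.1 // S.2 k}

open Classical in
/-- The enhanced state(s) obtained from `S` by adding the edge `e`: zero if `e`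
already belongs to `S` or if the added edge merges two components both colored `x`
(the product `x∗x = 0`); otherwise the enhanced state on `insert e s` whose
coloring is obtained from that of `S` using the product
`1∗1 = 1`, `1∗x = x∗1 = x`. -/
noncomputable def addEdge (S : G.EState) (e : Fin G.n) : G.EState →₀ ℤ :=
  if e ∈ S.1 then 0
  else
    let p : G.Comp S.1 → G.Comp (insert e S.1) :=
      qmap fun _ _ huv => huv.elim fun f hf => ⟨f, Finset.mem_insert_of_mem hf.1, hf.2⟩
    if ∃ k1 k2 : G.Comp S.1, k1 ≠ k2 ∧ p k1 = p k2 ∧ S.2 k1 ∧ S.2 k2 then 0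
    else Finsupp.single ⟨insert e S.1, fun K => ∃ k, p k = K ∧ S.2 k⟩ 1

/-- The differential applied to a single enhanced state: the signed sum, over all
edges `e` not in `S`, of the states obtained by adding `e`; the sign is `(-1)^{n(e)}`
where `n(e)` is the number of edges of `S` ordered before `e`. -/
noncomputable def dState (S : G.EState) : G.EState →₀ ℤ :=
  ∑ e : Fin G.n, ((-1 : ℤ) ^ (S.1.filter fun f => f < e).card) • G.addEdge S e

/-- The differential of the graph cohomology complex, as a linear endomorphism of
the free `ℤ`-module generated by all enhanced states. -/
noncomputable def diff : (G.EState →₀ ℤ) →ₗ[ℤ] (G.EState →₀ ℤ) :=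
  Finsupp.lsum ℤ fun S => LinearMap.toSpanSingleton ℤ _ (G.dState S)

/-- The chain group `C^{i,j}(G)`: the free `ℤ`-module spanned by the enhanced
states with `i` edges and `j` components colored `x`, as a submodule of the free
module on all enhanced states. -/
noncomputable def Cmod (i j : ℕ) : Submodule ℤ (G.EState →₀ ℤ) :=
  Finsupp.supported ℤ ℤ {S : G.EState | S.1.card = i ∧ G.jdeg S = j}

/-- The cocycles of bidegree `(i,j)`. -/
noncomputable def Zmod (i j : ℕ) : Submodule ℤ (G.EState →₀ ℤ) :=
  LinearMap.ker G.diff ⊓ G.Cmod i j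

/-- The coboundaries: `0` for `i = 0`, the image of `C^{i,j}` for `i + 1`. -/
noncomputable def Bmod : ℕ → ℕ → Submodule ℤ (G.EState →₀ ℤ)
  | 0, _ => ⊥
  | i + 1, j => Submodule.map G.diff (G.Cmod i j)

/-- The graph cohomology group `H^{i,j}(G)` (cocycles modulo coboundaries in
bidegree `(i,j)`). -/
noncomputable def Hmod (i j : ℕ) : Type :=
  (G.Zmod i j).toAddSubgroup ⧸
    (AddSubgroup.comap (G.Zmod i j).toAddSubgroup.subtype (G.Bmod i j).toAddSubgroup)

noncomputable instance (i j : ℕ) : AddCommGroup (G.Hmod i j) := by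
  delta Hmod; infer_instance

end OGraph

/-!
An enhanced state of `G` either avoids `e`, and is then an enhanced state of `G − e`, or contains
`e`, and is then an enhanced state of `G / e` with one edge more. Accordingly `C(G)` is the direct
sum of `C(G − e)` and of `C(G / e)` shifted by one. Ordering the edges, a state `s` of `G / e`
acquires the sign `(-1) ^ #{f ∈ s | f < e}`, and with these signs `C(G)` becomes the mapping cone
of the cochain map `C(G − e) → C(G / e)` that adds `e`. The sequence is the long exact sequence of
this cone.
-/

/-! ### Cohomology of mapping cones -/

section ConjHom

variable {A A' B B' C C' : Type*} [AddCommMonoid A] [AddCommMonoid A'] [AddCommMonoid B]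
  [AddCommMonoid B'] [AddCommMonoid C] [AddCommMonoid C']

/-- The homomorphism `A →+ B` corresponding to `f : A' →+ B'` under isomorphisms of its source and
target. -/
def conjHom (eA : A ≃+ A') (eB : B ≃+ B') (f : A' →+ B') : A →+ B :=
  eB.symm.toAddMonoidHom.comp (f.comp eA.toAddMonoidHom)

theorem conjHom_injective (eA : A ≃+ A') (eB : B ≃+ B') {f : A' →+ B'}
    (hf : Function.Injective f) : Function.Injective (conjHom eA eB f) :=
  eB.symm.injective.comp (hf.comp eA.injective)

theorem exact_conjHom (eA : A ≃+ A') (eB : B ≃+ B') (eC : C ≃+ C') {f : A' →+ B'} {g : B' →+ C'}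
    (hfg : Function.Exact f g) : Function.Exact (conjHom eA eB f) (conjHom eB eC g) :=
  Function.Exact.of_ladder_addEquiv_of_exact eA.symm eB.symm eC.symm
    (AddMonoidHom.ext fun a => by simp [conjHom]) (AddMonoidHom.ext fun b => by simp [conjHom]) hfg

end ConjHom

/-- Cochain-complex data inside a single module `M`: an endomorphism `d` and submodules `C i`, the
cochains of degree `i`. Neither `d ∘ d = 0` nor `d (C i) ≤ C (i + 1)` is built in: `Cohomology`
makes sense for any `d` and `C`. -/
structure GradedDifferential (R M : Type*) [Ring R] [AddCommGroup M] [Module R M] where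
  d : Module.End R M
  C : ℕ → Submodule R M

namespace GradedDifferential

variable {R M N P : Type*} [Ring R] [AddCommGroup M] [Module R M] [AddCommGroup N] [Module R N]
  [AddCommGroup P] [Module R P]

section Cohomology

variable (K : GradedDifferential R M) (i : ℕ)

/-- The cochains of degree `i - 1`, with nothing in degree `-1`. -/
def prev : ℕ → Submodule R M
  | 0 => ⊥
  | i + 1 => K.C i

/-- The cocycles of degree `i`. -/
def cocycles : Submodule R M := LinearMap.ker K.d ⊓ K.C i

/-- The coboundaries of degree `i`. -/
def coboundaries : Submodule R M := (K.prev i).map K.d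

/-- The cohomology in degree `i`. Coboundaries are intersected with the cocycles, so that no
relation between the two is presupposed. -/
abbrev Cohomology : Type _ := K.cocycles i ⧸ (K.coboundaries i).submoduleOf (K.cocycles i)

variable {K i}

theorem mem_cocycles {x : M} : x ∈ K.cocycles i ↔ K.d x = 0 ∧ x ∈ K.C i := Iff.rfl

theorem mem_coboundaries {y : M} : y ∈ K.coboundaries i ↔ ∃ x ∈ K.prev i, K.d x = y :=
  Iff.rfl

theorem mem_coboundaries_zero {y : M} : y ∈ K.coboundaries 0 ↔ y = 0 := by
  simp [coboundaries, prev]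

/-- The cohomology class of a cocycle. -/
def Cohomology.mk (z : M) (hz : z ∈ K.cocycles i) : K.Cohomology i :=
  Submodule.Quotient.mk ⟨z, hz⟩

theorem Cohomology.exists_mk_eq (c : K.Cohomology i) : ∃ z hz, mk z hz = c := by
  obtain ⟨⟨z, hz⟩, rfl⟩ := Submodule.Quotient.mk_surjective _ c
  exact ⟨z, hz, rfl⟩

theorem Cohomology.mk_eq_zero_iff {z : M} {hz : z ∈ K.cocycles i} :
    mk z hz = 0 ↔ z ∈ K.coboundaries i :=
  Submodule.Quotient.mk_eq_zero _

theorem Cohomology.mk_eq_mk_iff {y z : M} {hy : y ∈ K.cocycles i} {hz : z ∈ K.cocycles i} :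
    mk y hy = mk z hz ↔ y - z ∈ K.coboundaries i := by
  rw [← sub_eq_zero]
  exact mk_eq_zero_iff (hz := sub_mem hy hz)

end Cohomology

section Maps

variable {K : GradedDifferential R M} {L : GradedDifferential R N} {Q : GradedDifferential R P}
  {i k l : ℕ} {g : M →ₗ[R] N} {h : N →ₗ[R] P}

/-- The map induced on cohomology, possibly of different degrees, by a linear map preserving
cocycles and coboundaries. -/
def Cohomology.map (g : M →ₗ[R] N) (hZ : ∀ z ∈ K.cocycles i, g z ∈ L.cocycles k)
    (hB : ∀ z ∈ K.coboundaries i, g z ∈ L.coboundaries k) : K.Cohomology i →ₗ[R] L.Cohomology k :=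
  Submodule.mapQ _ _ (g.restrict hZ) fun z hz => hB z.1 hz

theorem Cohomology.map_mk {hZ : ∀ z ∈ K.cocycles i, g z ∈ L.cocycles k}
    {hB : ∀ z ∈ K.coboundaries i, g z ∈ L.coboundaries k} {z : M} (hz : z ∈ K.cocycles i) :
    map g hZ hB (mk z hz) = mk (g z) (hZ z hz) :=
  rfl

theorem Cohomology.exact_map_map {hZg : ∀ z ∈ K.cocycles i, g z ∈ L.cocycles k}
    {hBg : ∀ z ∈ K.coboundaries i, g z ∈ L.coboundaries k}
    {hZh : ∀ z ∈ L.cocycles k, h z ∈ Q.cocycles l}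
    {hBh : ∀ z ∈ L.coboundaries k, h z ∈ Q.coboundaries l}
    (hex : ∀ y ∈ L.cocycles k,
      h y ∈ Q.coboundaries l ↔ ∃ x ∈ K.cocycles i, g x - y ∈ L.coboundaries k) :
    Function.Exact (map g hZg hBg) (map h hZh hBh) := by
  intro c
  obtain ⟨y, hy, rfl⟩ := exists_mk_eq c
  rw [map_mk, mk_eq_zero_iff, hex y hy]
  constructor
  · rintro ⟨x, hx, hxy⟩
    exact ⟨mk x hx, mk_eq_mk_iff.2 hxy⟩
  · rintro ⟨a, ha⟩
    obtain ⟨x, hx, rfl⟩ := exists_mk_eq a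
    exact ⟨x, hx, mk_eq_mk_iff.1 ha⟩

/-- `g` is a cochain map: it commutes with the differentials and preserves degrees. -/
structure IsCochainMap (K : GradedDifferential R M) (L : GradedDifferential R N)
    (g : M →ₗ[R] N) : Prop where
  map_d : ∀ x, g (K.d x) = L.d (g x)
  map_mem : ∀ i, ∀ x ∈ K.C i, g x ∈ L.C i

namespace IsCochainMap

theorem map_mem_prev (hg : IsCochainMap K L g) {x : M} (hx : x ∈ K.prev i) : g x ∈ L.prev i := by
  cases i with
  | zero => exact (Submodule.mem_bot R).2 (by rw [(Submodule.mem_bot R).1 hx, map_zero])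
  | succ i => exact hg.map_mem i x hx

theorem map_mem_cocycles (hg : IsCochainMap K L g) (z : M) (hz : z ∈ K.cocycles i) :
    g z ∈ L.cocycles i :=
  mem_cocycles.2 ⟨by rw [← hg.map_d, (mem_cocycles.1 hz).1, map_zero], hg.map_mem i z hz.2⟩

theorem map_mem_coboundaries (hg : IsCochainMap K L g) (z : M) (hz : z ∈ K.coboundaries i) :
    g z ∈ L.coboundaries i := by
  obtain ⟨y, hy, rfl⟩ := mem_coboundaries.1 hz
  exact mem_coboundaries.2 ⟨g y, hg.map_mem_prev hy, (hg.map_d y).symm⟩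

/-- The map induced on cohomology by a cochain map. -/
def cohomologyMap (hg : IsCochainMap K L g) (i : ℕ) : K.Cohomology i →ₗ[R] L.Cohomology i :=
  Cohomology.map g hg.map_mem_cocycles hg.map_mem_coboundaries

/-- The isomorphism on cohomology induced by an isomorphism of complexes. -/
def cohomologyEquiv {Φ : M ≃ₗ[R] N} (hΦ : IsCochainMap K L Φ) (hΨ : IsCochainMap L K Φ.symm)
    (i : ℕ) : K.Cohomology i ≃ₗ[R] L.Cohomology i :=
  LinearEquiv.ofLinearMap (hΦ.cohomologyMap i) (hΨ.cohomologyMap i)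
    (LinearMap.ext fun c => by
      obtain ⟨z, hz, rfl⟩ := Cohomology.exists_mk_eq c
      simp [cohomologyMap, Cohomology.map_mk])
    (LinearMap.ext fun c => by
      obtain ⟨z, hz, rfl⟩ := Cohomology.exists_mk_eq c
      simp [cohomologyMap, Cohomology.map_mk])

theorem symm {Φ : M ≃ₗ[R] N} (hΦ : IsCochainMap K L Φ)
    (hmem : ∀ i, ∀ y ∈ L.C i, Φ.symm y ∈ K.C i) : IsCochainMap L K Φ.symm where
  map_d y := Φ.injective (by simpa using (hΦ.map_d (Φ.symm y)).symm)
  map_mem := hmem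

end IsCochainMap

end Maps

section Cone

variable (K : GradedDifferential R M) (L : GradedDifferential R N) (f : M →ₗ[R] N) {i : ℕ}

/-- The mapping cone of `f`, shifted so that `K` sits in its own degrees and `L` one degree
higher. -/
def cone : GradedDifferential R (M × N) where
  d := (K.d ∘ₗ LinearMap.fst R M N).prod (f ∘ₗ LinearMap.fst R M N - L.d ∘ₗ LinearMap.snd R M N)
  C i := (K.C i).prod (L.prev i)

variable {K L f}

theorem cone_d_apply (x : M × N) : (cone K L f).d x = (K.d x.1, f x.1 - L.d x.2) := rfl

theorem mem_cocycles_cone {x : M × N} : x ∈ (cone K L f).cocycles i ↔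
    (K.d x.1 = 0 ∧ f x.1 = L.d x.2) ∧ x.1 ∈ K.C i ∧ x.2 ∈ L.prev i := by
  rw [mem_cocycles, cone_d_apply, Prod.mk_eq_zero, sub_eq_zero]
  rfl

theorem mem_coboundaries_succ_cone {y : M × N} : y ∈ (cone K L f).coboundaries (i + 1) ↔
    ∃ a ∈ K.C i, ∃ b ∈ L.prev i, K.d a = y.1 ∧ f a - L.d b = y.2 := by
  rw [mem_coboundaries]
  constructor
  · rintro ⟨⟨a, b⟩, ⟨ha, hb⟩, rfl⟩
    exact ⟨a, ha, b, hb, rfl, rfl⟩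
  · rintro ⟨a, ha, b, hb, h₁, h₂⟩
    exact ⟨(a, b), ⟨ha, hb⟩, Prod.ext h₁ h₂⟩

theorem isCochainMap_cone_fst : IsCochainMap (cone K L f) K (LinearMap.fst R M N) where
  map_d _ := rfl
  map_mem _ _ hx := hx.1

theorem inr_mem_cocycles_cone (z : N) (hz : z ∈ L.cocycles i) :
    LinearMap.inr R M N z ∈ (cone K L f).cocycles (i + 1) :=
  mem_cocycles_cone.2 ⟨⟨map_zero _, (map_zero f).trans hz.1.symm⟩, zero_mem _, hz.2⟩

theorem inr_mem_coboundaries_cone (z : N) (hz : z ∈ L.coboundaries i) :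
    LinearMap.inr R M N z ∈ (cone K L f).coboundaries (i + 1) := by
  obtain ⟨y, hy, rfl⟩ := mem_coboundaries.1 hz
  exact mem_coboundaries_succ_cone.2 ⟨0, zero_mem _, -y, neg_mem hy, by simp, by simp⟩

variable (K L f) in
/-- The map `Hⁱ(L) → Hⁱ⁺¹(cone f)` induced by the inclusion `L[-1] → cone f`, which commutes with
the differentials only up to sign. -/
def coneInr (i : ℕ) :
    L.Cohomology i →ₗ[R] (cone K L f).Cohomology (i + 1) :=
  Cohomology.map (LinearMap.inr R M N) inr_mem_cocycles_cone inr_mem_coboundaries_cone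

variable (K L f) in
/-- The map `Hⁱ(cone f) → Hⁱ(K)` induced by the projection. -/
def coneFst (i : ℕ) : (cone K L f).Cohomology i →ₗ[R] K.Cohomology i :=
  isCochainMap_cone_fst.cohomologyMap i

theorem coneFst_zero_injective : Function.Injective (coneFst K L f 0) := by
  rw [injective_iff_map_eq_zero]
  intro c hc
  obtain ⟨⟨a, b⟩, hz, rfl⟩ := Cohomology.exists_mk_eq c
  have ha : a = 0 := mem_coboundaries_zero.1 (Cohomology.mk_eq_zero_iff.1 hc)
  have hb : b = 0 := (mem_cocycles_cone.1 hz).2.2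
  exact Cohomology.mk_eq_zero_iff.2 (mem_coboundaries_zero.2 (Prod.ext ha hb))

theorem exact_coneFst_cohomologyMap (hf : IsCochainMap K L f) (i : ℕ) :
    Function.Exact (coneFst K L f i) (hf.cohomologyMap i) := by
  unfold coneFst IsCochainMap.cohomologyMap
  refine Cohomology.exact_map_map fun a ha => ?_
  constructor
  · intro hfa
    obtain ⟨b, hb, hba⟩ := mem_coboundaries.1 hfa
    exact ⟨(a, b), mem_cocycles_cone.2 ⟨⟨ha.1, hba.symm⟩, ha.2, hb⟩, by simp⟩
  · rintro ⟨⟨a', b⟩, hz, haa'⟩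
    obtain ⟨⟨-, hfa'⟩, -, hb⟩ := mem_cocycles_cone.1 hz
    obtain ⟨c, hc, hca⟩ := mem_coboundaries.1 haa'
    refine mem_coboundaries.2 ⟨b - f c, sub_mem hb (hf.map_mem_prev hc), ?_⟩
    rw [map_sub, ← hfa', ← hf.map_d, hca, ← map_sub]
    simp

theorem exact_cohomologyMap_coneInr (hf : IsCochainMap K L f) (i : ℕ) :
    Function.Exact (hf.cohomologyMap i) (coneInr K L f i) := by
  unfold coneInr IsCochainMap.cohomologyMap
  refine Cohomology.exact_map_map fun b _ => ?_
  rw [mem_coboundaries_succ_cone]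
  constructor
  · rintro ⟨a, ha, c, hc, hda, hac⟩
    refine ⟨a, ⟨hda, ha⟩, mem_coboundaries.2 ⟨c, hc, ?_⟩⟩
    exact (sub_eq_iff_eq_add.1 hac).symm ▸ by simp
  · rintro ⟨a, ha, hab⟩
    obtain ⟨c, hc, hca⟩ := mem_coboundaries.1 hab
    exact ⟨a, ha.2, c, hc, ha.1, by rw [hca, sub_sub_cancel]; rfl⟩

theorem exact_coneInr_coneFst (hf : IsCochainMap K L f) (i : ℕ) :
    Function.Exact (coneInr K L f i) (coneFst K L f (i + 1)) := by
  unfold coneInr coneFst IsCochainMap.cohomologyMap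
  refine Cohomology.exact_map_map fun ⟨a, b⟩ hz => ?_
  obtain ⟨⟨-, hfa⟩, -, hb⟩ := mem_cocycles_cone.1 hz
  constructor
  · rintro ⟨a', ha', rfl⟩
    refine ⟨b - f a', mem_cocycles.2 ⟨?_, sub_mem hb (hf.map_mem i a' ha')⟩,
      mem_coboundaries_succ_cone.2 ⟨-a', neg_mem ha', 0, zero_mem _, by simp, by simp⟩⟩
    rw [map_sub, ← hf.map_d, sub_eq_zero]
    exact hfa.symm
  · rintro ⟨b', -, hbb'⟩
    obtain ⟨a', ha', -, -, hda', -⟩ := mem_coboundaries_succ_cone.1 hbb'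
    exact ⟨-a', neg_mem ha', by simpa [neg_eq_iff_eq_neg] using hda'⟩

end Cone

end GradedDifferential

/-! ### Enhanced states -/

namespace OGraph

/-- The complex `C^{•,j}(G)`. -/
noncomputable def cochains (G : OGraph) (j : ℕ) : GradedDifferential ℤ (G.EState →₀ ℤ) where
  d := G.diff
  C i := G.Cmod i j

theorem Bmod_eq_coboundaries (G : OGraph) (i j : ℕ) :
    G.Bmod i j = (G.cochains j).coboundaries i := by
  cases i with
  | zero => exact (Submodule.map_bot _).symm
  | succ i => rfl

/-- `H^{i,j}(G)` as the cohomology of `C^{•,j}(G)`. -/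
noncomputable def hmodEquiv (G : OGraph) (i j : ℕ) :
    G.Hmod i j ≃+ (G.cochains j).Cohomology i :=
  (QuotientAddGroup.quotientAddEquivOfEq
    (congrArg (fun B : Submodule ℤ _ => B.toAddSubgroup.comap (G.Zmod i j).toAddSubgroup.subtype)
      (G.Bmod_eq_coboundaries i j)) :)

end OGraph

theorem ncard_image_eq_ncard_image {α β γ : Type*} {f : α → β} {g : α → γ} {X : Set α}
    (h : ∀ u ∈ X, ∀ v ∈ X, f u = f v ↔ g u = g v) : (f '' X).ncard = (g '' X).ncard := by
  have hker : Setoid.ker (X.domRestrict f) = Setoid.ker (X.domRestrict g) :=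
    Setoid.ext fun u v => h u u.2 v v.2
  rw [← Set.range_domRestrict, ← Set.range_domRestrict, ← Nat.card_coe_set_eq,
    ← Nat.card_coe_set_eq, ← Nat.card_congr (Setoid.quotientKerEquivRange _), hker,
    Nat.card_congr (Setoid.quotientKerEquivRange _)]

namespace OGraph

section States

variable {G : OGraph} {s t : Finset (Fin G.n)} {u v : G.V}

/-- The component of the vertex `v` in the spanning subgraph `[G:s]`. -/
def compMk (G : OGraph) (s : Finset (Fin G.n)) (v : G.V) : G.Comp s := Quot.mk _ v

theorem compMk_surjective : Function.Surjective (G.compMk s) := Quot.exists_rep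

theorem compMk_eq_of_ends {k : Fin G.n} (hk : k ∈ s) (huv : G.ends k = s(u, v)) :
    G.compMk s u = G.compMk s v :=
  Quot.sound ⟨k, hk, huv⟩

theorem apply_eq_of_compMk_eq {α : Type*} {g : G.V → α}
    (hg : ∀ k ∈ s, ∀ a b, G.ends k = s(a, b) → g a = g b) (h : G.compMk s u = G.compMk s v) :
    g u = g v :=
  congrArg (Quot.lift g fun a b ⟨k, hk, hab⟩ => hg k hk a b hab) h

theorem compMk_eq_mono (hst : s ⊆ t) (h : G.compMk s u = G.compMk s v) :
    G.compMk t u = G.compMk t v :=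
  apply_eq_of_compMk_eq (fun _ hk _ _ => compMk_eq_of_ends (hst hk)) h

/-- The vertices lying in a component coloured `x`. Together with the edge set it determines the
enhanced state, see `eState_ext`; working with vertex sets avoids maps between component sets. -/
def xSet (S : G.EState) : Set G.V := {v | S.2 (G.compMk S.1 v)}

theorem mem_xSet_congr {S : G.EState} (h : G.compMk S.1 u = G.compMk S.1 v) :
    u ∈ xSet S ↔ v ∈ xSet S :=
  iff_of_eq (congrArg S.2 h)

theorem eState_ext {S T : G.EState} (hedges : S.1 = T.1) (hx : xSet S = xSet T) : S = T := by
  obtain ⟨s, p⟩ := S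
  obtain ⟨t, q⟩ := T
  obtain rfl : s = t := hedges
  congr 1
  funext K
  obtain ⟨v, rfl⟩ := compMk_surjective K
  exact congrArg (v ∈ ·) hx

/-- The enhanced state with edge set `t` whose components coloured `x` are those meeting `X`. -/
def saturate (t : Finset (Fin G.n)) (X : Set G.V) : G.EState := ⟨t, fun K => K ∈ G.compMk t '' X⟩

theorem saturate_fst (t : Finset (Fin G.n)) (X : Set G.V) : (saturate t X).1 = t := rfl

theorem mem_xSet_saturate {X : Set G.V} :
    v ∈ xSet (saturate t X) ↔ ∃ u ∈ X, G.compMk t u = G.compMk t v :=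
  Iff.rfl

theorem saturate_xSet_saturate (hst : s ⊆ t) (X : Set G.V) :
    saturate t (xSet (saturate s X)) = saturate t X := by
  refine eState_ext rfl (Set.ext fun v => ?_)
  simp only [mem_xSet_saturate]
  constructor
  · rintro ⟨w, ⟨u, hu, huw⟩, hwv⟩
    exact ⟨u, hu, (compMk_eq_mono hst huw).trans hwv⟩
  · rintro ⟨u, hu, huv⟩
    exact ⟨u, ⟨u, hu, rfl⟩, huv⟩

theorem jdeg_eq_ncard (S : G.EState) : G.jdeg S = (G.compMk S.1 '' xSet S).ncard := by
  change Nat.card {K | S.2 K} = _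
  rw [Nat.card_coe_set_eq, ← Set.image_preimage_eq {K | S.2 K} compMk_surjective]
  rfl

theorem jdeg_saturate (t : Finset (Fin G.n)) (X : Set G.V) :
    G.jdeg (saturate t X) = (G.compMk t '' X).ncard :=
  Nat.card_coe_set_eq (G.compMk t '' X)

/-- Enlarging the edge set of `S` to `t` does not merge two components coloured `x`. -/
def MergeFree (S : G.EState) (t : Finset (Fin G.n)) : Prop :=
  ∀ u ∈ xSet S, ∀ v ∈ xSet S, G.compMk t u = G.compMk t v → G.compMk S.1 u = G.compMk S.1 v

theorem mergeFree_iff_of_subset {S : G.EState} (hs : S.1 ⊆ s) (hst : s ⊆ t) :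
    MergeFree S t ↔ MergeFree S s ∧ MergeFree (saturate s (xSet S)) t := by
  constructor
  · refine fun h => ⟨fun u hu v hv huv => h u hu v hv (compMk_eq_mono hst huv), ?_⟩
    rintro u ⟨a, ha, hau⟩ v ⟨b, hb, hbv⟩ huv
    have hab : G.compMk S.1 a = G.compMk S.1 b := h a ha b hb <|
      (compMk_eq_mono hst hau).trans (huv.trans (compMk_eq_mono hst hbv).symm)
    exact hau.symm.trans ((compMk_eq_mono hs hab).trans hbv)
  · rintro ⟨hSs, hst'⟩ u hu v hv huv
    exact hSs u hu v hv (hst' u ⟨u, hu, rfl⟩ v ⟨v, hv, rfl⟩ huv)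

open Classical in
/-- The chain obtained from `S` by enlarging its edge set to `t` and multiplying the colours of the
components that become connected; it vanishes if a product `x * x` occurs. -/
noncomputable def merge (S : G.EState) (t : Finset (Fin G.n)) : G.EState →₀ ℤ :=
  if MergeFree S t then Finsupp.single (saturate t (xSet S)) 1 else 0

theorem addEdge_eq_merge {S : G.EState} {k : Fin G.n} (hk : k ∉ S.1) :
    G.addEdge S k = merge S (insert k S.1) := by
  unfold addEdge merge
  rw [if_neg hk]
  extract_lets p
  have hmerge : (∃ K L, K ≠ L ∧ p K = p L ∧ S.2 K ∧ S.2 L) ↔ ¬ MergeFree S (insert k S.1) := by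
    simp only [MergeFree, not_forall, compMk_surjective.exists]
    constructor
    · rintro ⟨u, v, hne, huv, hu, hv⟩
      exact ⟨u, hu, v, hv, huv, hne⟩
    · rintro ⟨u, hu, v, hv, huv, hne⟩
      exact ⟨u, v, hne, huv, hu, hv⟩
  have hstate : (⟨insert k S.1, fun K => ∃ L, p L = K ∧ S.2 L⟩ : G.EState) =
      saturate (insert k S.1) (xSet S) := by
    refine eState_ext rfl (Set.ext fun v => ?_)
    exact compMk_surjective.exists.trans (exists_congr fun _ => and_comm)
  rw [hstate]
  by_cases h : MergeFree S (insert k S.1)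
  · rw [if_neg fun h' => hmerge.1 h' h, if_pos h]
  · rw [if_pos (hmerge.2 h), if_neg h]

theorem fst_eq_of_merge_ne_zero {S T : G.EState} (h : merge S t T ≠ 0) : T.1 = t := by
  unfold merge at h
  split_ifs at h
  · rw [Finsupp.single_apply_ne_zero] at h
    rw [h.1]; rfl
  · exact absurd rfl h

theorem jdeg_saturate_xSet {S : G.EState} (hst : S.1 ⊆ t) (h : MergeFree S t) :
    G.jdeg (saturate t (xSet S)) = G.jdeg S := by
  rw [jdeg_saturate, jdeg_eq_ncard]
  exact ncard_image_eq_ncard_image fun u hu v hv => ⟨h u hu v hv, compMk_eq_mono hst⟩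

theorem merge_mem_Cmod {S : G.EState} (hst : S.1 ⊆ t) : merge S t ∈ G.Cmod t.card (G.jdeg S) := by
  unfold merge
  split_ifs with h
  · exact Finsupp.single_mem_supported ℤ 1 ⟨rfl, jdeg_saturate_xSet hst h⟩
  · exact zero_mem _

end States

section Operators

variable {G : OGraph} {i j : ℕ}

theorem mem_Cmod_iff {x : G.EState →₀ ℤ} :
    x ∈ G.Cmod i j ↔ ∀ S, x S ≠ 0 → S.1.card = i ∧ G.jdeg S = j := by
  simp only [Cmod, Finsupp.mem_supported', Set.mem_ofPred_eq, ne_eq, not_imp_comm]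

theorem map_mem_of_mem_Cmod {M : Type*} [AddCommGroup M] {φ : (G.EState →₀ ℤ) →ₗ[ℤ] M}
    {N : Submodule ℤ M}
    (h : ∀ S : G.EState, S.1.card = i → G.jdeg S = j → φ (Finsupp.single S 1) ∈ N)
    {x : G.EState →₀ ℤ} (hx : x ∈ G.Cmod i j) : φ x ∈ N := by
  have hle : G.Cmod i j ≤ N.comap φ := by
    rw [Cmod, Finsupp.supported_eq_span_single, Submodule.span_le]
    rintro _ ⟨S, ⟨hi, hj⟩, rfl⟩
    exact h S hi hj
  exact hle hx

/-- The operator adding the edge `k` to every state, without the sign of the differential and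
without discarding the states which already contain `k`; those are fixed. -/
noncomputable def mergeEdge (k : Fin G.n) : Module.End ℤ (G.EState →₀ ℤ) :=
  Finsupp.linearCombination ℤ fun S => merge S (insert k S.1)

theorem mergeEdge_single (k : Fin G.n) (S : G.EState) :
    mergeEdge k (Finsupp.single S 1) = merge S (insert k S.1) := by
  simp [mergeEdge]

theorem mergeEdge_merge {S : G.EState} {t : Finset (Fin G.n)} (hst : S.1 ⊆ t) (k : Fin G.n) :
    mergeEdge k (merge S t) = merge S (insert k t) := by
  have htk := Finset.subset_insert k t
  have htrans := mergeFree_iff_of_subset hst htk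
  by_cases hSt : MergeFree S t
  · have hiff : MergeFree S (insert k t) ↔ MergeFree (saturate t (xSet S)) (insert k t) :=
      htrans.trans (and_iff_right hSt)
    rw [merge, if_pos hSt, mergeEdge_single, saturate_fst, merge, merge, hiff,
      saturate_xSet_saturate htk]
  · rw [merge, merge, if_neg hSt, map_zero, if_neg fun h => hSt (htrans.1 h).1]

theorem mergeEdge_comm (k l : Fin G.n) (x : G.EState →₀ ℤ) :
    mergeEdge k (mergeEdge l x) = mergeEdge l (mergeEdge k x) := by
  suffices mergeEdge k ∘ₗ mergeEdge l = mergeEdge (G := G) l ∘ₗ mergeEdge k from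
    LinearMap.congr_fun this x
  refine Finsupp.lhom_ext' fun S => LinearMap.ext_ring ?_
  simp only [LinearMap.comp_apply, Finsupp.lsingle_apply, mergeEdge_single,
    mergeEdge_merge (Finset.subset_insert _ _), Finset.insert_comm]

/-- The diagonal operator multiplying each state by a weight depending on its edge set. -/
noncomputable def weight (w : Finset (Fin G.n) → ℤ) : Module.End ℤ (G.EState →₀ ℤ) :=
  Finsupp.linearCombination ℤ fun S => Finsupp.single S (w S.1)

theorem weight_single (w : Finset (Fin G.n) → ℤ) (S : G.EState) :
    weight w (Finsupp.single S 1) = w S.1 • Finsupp.single S 1 := by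
  simp [weight]

theorem weight_apply (w : Finset (Fin G.n) → ℤ) (x : G.EState →₀ ℤ) (S : G.EState) :
    weight w x S = w S.1 * x S := by
  induction x using Finsupp.induction_linear with
  | zero => simp
  | add x y hx hy => rw [map_add, Finsupp.add_apply, hx, hy, Finsupp.add_apply, mul_add]
  | single T a =>
    by_cases h : T = S
    · subst h; simp [weight, mul_comm]
    · simp [weight, Finsupp.single_eq_of_ne' h]

theorem weight_weight (w w' : Finset (Fin G.n) → ℤ) (x : G.EState →₀ ℤ) :
    weight w (weight w' x) = weight (w * w') x :=
  Finsupp.ext fun S => by simp only [weight_apply, Pi.mul_apply, mul_assoc]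

theorem weight_one (x : G.EState →₀ ℤ) : weight 1 x = x :=
  Finsupp.ext fun S => by simp only [weight_apply, Pi.one_apply, one_mul]

theorem weight_zero (x : G.EState →₀ ℤ) : weight 0 x = 0 :=
  Finsupp.ext fun S => by simp [weight_apply]

theorem weight_neg (w : Finset (Fin G.n) → ℤ) (x : G.EState →₀ ℤ) :
    weight (-w) x = -weight w x :=
  Finsupp.ext fun S => by simp [weight_apply]

theorem weight_eq_smul {x : G.EState →₀ ℤ} {s : Finset (Fin G.n)} (hx : ∀ S, x S ≠ 0 → S.1 = s)
    (w : Finset (Fin G.n) → ℤ) : weight w x = w s • x := by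
  ext S
  rw [weight_apply, Finsupp.smul_apply, smul_eq_mul]
  by_cases hS : x S = 0
  · simp [hS]
  · rw [hx S hS]

theorem weight_mem_Cmod (w : Finset (Fin G.n) → ℤ) {x : G.EState →₀ ℤ} (hx : x ∈ G.Cmod i j) :
    weight w x ∈ G.Cmod i j :=
  mem_Cmod_iff.2 fun S hS =>
    mem_Cmod_iff.1 hx S (right_ne_zero_of_mul (weight_apply w x S ▸ hS))

theorem weight_mergeEdge (w : Finset (Fin G.n) → ℤ) (k : Fin G.n) (x : G.EState →₀ ℤ) :
    weight w (mergeEdge k x) = mergeEdge k (weight (w ∘ insert k) x) := by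
  suffices weight w ∘ₗ mergeEdge k = mergeEdge k ∘ₗ weight (w ∘ insert k) from
    LinearMap.congr_fun this x
  refine Finsupp.lhom_ext' fun S => LinearMap.ext_ring ?_
  simp only [LinearMap.comp_apply, Finsupp.lsingle_apply, mergeEdge_single, weight_single, map_smul]
  exact weight_eq_smul (fun _ => fst_eq_of_merge_ne_zero) w

/-- The sign with which adding `k` to the edge set `s` enters the differential, read as `0` if `k`
already belongs to `s`. -/
def incidenceSign {α : Type*} [LinearOrder α] (k : α) (s : Finset α) : ℤ :=
  if k ∈ s then 0 else (-1) ^ (s.filter (· < k)).card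

theorem incidenceSign_of_mem {α : Type*} [LinearOrder α] {k : α} {s : Finset α} (hk : k ∈ s) :
    incidenceSign k s = 0 :=
  if_pos hk

theorem incidenceSign_of_notMem {α : Type*} [LinearOrder α] {k : α} {s : Finset α} (hk : k ∉ s) :
    incidenceSign k s = (-1) ^ (s.filter (· < k)).card :=
  if_neg hk

theorem incidenceSign_insert_mul {α : Type*} [LinearOrder α] {k l : α} (hkl : k ≠ l)
    (s : Finset α) : incidenceSign k (insert l s) * incidenceSign l s =
      -(incidenceSign l (insert k s) * incidenceSign k s) := by
  by_cases hk : k ∈ s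
  · simp [incidenceSign, hk]
  by_cases hl : l ∈ s
  · simp [incidenceSign, hl]
  rw [incidenceSign_of_notMem hl, incidenceSign_of_notMem hk,
    incidenceSign_of_notMem (by simp [hkl, hk]), incidenceSign_of_notMem (by simp [hkl.symm, hl]),
    Finset.filter_insert, Finset.filter_insert]
  rcases hkl.lt_or_gt with h | h
  · rw [if_neg h.not_gt, if_pos h, Finset.card_insert_of_notMem (by simp [hk])]
    ring
  · rw [if_pos h, if_neg h.not_gt, Finset.card_insert_of_notMem (by simp [hl])]
    ring

theorem diff_eq_sum (x : G.EState →₀ ℤ) :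
    G.diff x = ∑ k, mergeEdge k (weight (incidenceSign k) x) := by
  suffices G.diff = ∑ k, mergeEdge k ∘ₗ weight (incidenceSign k) by
    rw [this]; simp only [LinearMap.sum_apply, LinearMap.comp_apply]
  refine Finsupp.lhom_ext' fun S => LinearMap.ext_ring ?_
  simp only [LinearMap.comp_apply, Finsupp.lsingle_apply, LinearMap.sum_apply, weight_single,
    map_smul, mergeEdge_single]
  have hdiff : G.diff (Finsupp.single S 1) = G.dState S := by simp [diff]
  rw [hdiff, dState]
  refine Finset.sum_congr rfl fun k _ => ?_
  by_cases hk : k ∈ S.1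
  · rw [addEdge, if_pos hk, incidenceSign_of_mem hk, smul_zero, zero_smul]
  · rw [addEdge_eq_merge hk, incidenceSign_of_notMem hk]

end Operators

end OGraph

/-! ### Embeddings of states -/

namespace OGraph

/-- A way of identifying the enhanced states of `G'` with those enhanced states of `G` whose edge
set lies in the range of `edges`: the vertices of `G'` are a quotient of those of `G`, and
`[G':s]` has the same components as `[G:edges s]`. The cohomological degree rises by `shift`. -/
structure StateEmbedding (G' G : OGraph) where
  vert : G.V → G'.V
  vert_surjective : Function.Surjective vert
  edges : Finset (Fin G'.n) → Finset (Fin G.n)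
  edges_injective : Function.Injective edges
  compMk_eq_iff : ∀ s u v, G'.compMk s (vert u) = G'.compMk s (vert v) ↔
    G.compMk (edges s) u = G.compMk (edges s) v
  shift : ℕ
  card_edges : ∀ s, (edges s).card = s.card + shift

namespace StateEmbedding

variable {G' G : OGraph} (φ : StateEmbedding G' G) {i j : ℕ}

/-- The state of `G` corresponding to a state of `G'`. -/
def state (S : G'.EState) : G.EState := saturate (φ.edges S.1) (φ.vert ⁻¹' xSet S)

theorem state_fst (S : G'.EState) : (φ.state S).1 = φ.edges S.1 := rfl

theorem xSet_state (S : G'.EState) : xSet (φ.state S) = φ.vert ⁻¹' xSet S := by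
  ext v
  constructor
  · rintro ⟨u, hu, huv⟩
    exact (mem_xSet_congr ((φ.compMk_eq_iff _ u v).2 huv)).1 hu
  · exact fun hv => ⟨v, hv, rfl⟩

theorem state_injective : Function.Injective φ.state := by
  intro S T h
  refine eState_ext (φ.edges_injective (congrArg Sigma.fst h)) ?_
  apply φ.vert_surjective.preimage_injective
  rw [← xSet_state, ← xSet_state, h]

theorem state_saturate (s : Finset (Fin G'.n)) (X : Set G'.V) :
    φ.state (saturate s X) = saturate (φ.edges s) (φ.vert ⁻¹' X) := by
  refine eState_ext rfl (Set.ext fun v => ?_)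
  rw [xSet_state, Set.mem_preimage, mem_xSet_saturate, mem_xSet_saturate,
    φ.vert_surjective.exists]
  simp only [φ.compMk_eq_iff, Set.mem_preimage]

theorem exists_state_eq {W : G.EState} {s : Finset (Fin G'.n)} (hW : φ.edges s = W.1) :
    ∃ S, φ.state S = W := by
  obtain ⟨_, colour⟩ := W
  subst hW
  refine ⟨saturate s (φ.vert '' xSet ⟨_, colour⟩), eState_ext rfl (Set.ext fun v => ?_)⟩
  rw [xSet_state, Set.mem_preimage, mem_xSet_saturate, Set.exists_mem_image]
  simp only [φ.compMk_eq_iff]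
  constructor
  · rintro ⟨u, hu, huv⟩
    exact (mem_xSet_congr huv).1 hu
  · exact fun hv => ⟨v, hv, rfl⟩

theorem jdeg_state (S : G'.EState) : G.jdeg (φ.state S) = G'.jdeg S := by
  rw [state, jdeg_saturate, jdeg_eq_ncard,
    ← Set.image_preimage_eq (xSet S) φ.vert_surjective, Set.image_image,
    Set.image_preimage_eq (xSet S) φ.vert_surjective]
  exact ncard_image_eq_ncard_image fun u _ v _ => (φ.compMk_eq_iff S.1 u v).symm

theorem mergeFree_state_iff (S : G'.EState) (t : Finset (Fin G'.n)) :
    MergeFree (φ.state S) (φ.edges t) ↔ MergeFree S t := by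
  simp only [MergeFree, φ.vert_surjective.forall, φ.compMk_eq_iff, xSet_state, Set.mem_preimage,
    state_fst]

/-- The linear extension of `state` to chains. -/
noncomputable def chain : (G'.EState →₀ ℤ) →ₗ[ℤ] (G.EState →₀ ℤ) :=
  Finsupp.lmapDomain ℤ ℤ φ.state

/-- The projection of the chains of `G` onto those of `G'`, killing the states outside the range of
`state`. -/
noncomputable def restrict : (G.EState →₀ ℤ) →ₗ[ℤ] (G'.EState →₀ ℤ) :=
  Finsupp.lcomapDomain φ.state φ.state_injective

theorem chain_single (S : G'.EState) (a : ℤ) :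
    φ.chain (Finsupp.single S a) = Finsupp.single (φ.state S) a :=
  Finsupp.mapDomain_single

theorem restrict_chain (x : G'.EState →₀ ℤ) : φ.restrict (φ.chain x) = x :=
  Finsupp.comapDomain_mapDomain φ.state φ.state_injective x

theorem chain_injective : Function.Injective φ.chain :=
  Function.LeftInverse.injective φ.restrict_chain

theorem restrict_chain_eq_zero {G'' : OGraph} (ψ : StateEmbedding G'' G)
    (hφψ : ∀ s t, φ.edges s ≠ ψ.edges t) (x : G''.EState →₀ ℤ) : φ.restrict (ψ.chain x) = 0 := by
  ext S
  refine Finsupp.mapDomain_of_notMem_range x _ ?_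
  rintro ⟨T, hT⟩
  exact hφψ S.1 T.1 (congrArg Sigma.fst hT.symm)

theorem chain_restrict {x : G.EState →₀ ℤ} (hx : ∀ W, x W ≠ 0 → ∃ s, φ.edges s = W.1) :
    φ.chain (φ.restrict x) = x := by
  refine Finsupp.mapDomain_comapDomain φ.state φ.state_injective x fun W hW => ?_
  obtain ⟨s, hs⟩ := hx W (Finsupp.mem_support_iff.1 hW)
  exact φ.exists_state_eq hs

theorem chain_merge (S : G'.EState) (t : Finset (Fin G'.n)) :
    φ.chain (merge S t) = merge (φ.state S) (φ.edges t) := by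
  unfold merge
  rw [φ.mergeFree_state_iff, xSet_state, ← state_saturate, ← chain_single]
  split_ifs
  · rfl
  · exact map_zero _

theorem chain_mergeEdge {k : Fin G'.n} {k' : Fin G.n}
    (hk : ∀ s, φ.edges (insert k s) = insert k' (φ.edges s)) (x : G'.EState →₀ ℤ) :
    φ.chain (mergeEdge k x) = mergeEdge k' (φ.chain x) := by
  suffices φ.chain ∘ₗ mergeEdge k = mergeEdge k' ∘ₗ φ.chain from LinearMap.congr_fun this x
  refine Finsupp.lhom_ext' fun S => LinearMap.ext_ring ?_
  simp only [LinearMap.comp_apply, Finsupp.lsingle_apply, mergeEdge_single, chain_single,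
    chain_merge, hk, state_fst]

theorem weight_chain (w : Finset (Fin G.n) → ℤ) (x : G'.EState →₀ ℤ) :
    weight w (φ.chain x) = φ.chain (weight (w ∘ φ.edges) x) := by
  suffices weight w ∘ₗ φ.chain = φ.chain ∘ₗ weight (w ∘ φ.edges) from LinearMap.congr_fun this x
  refine Finsupp.lhom_ext' fun S => LinearMap.ext_ring ?_
  simp only [LinearMap.comp_apply, Finsupp.lsingle_apply, weight_single, chain_single, map_smul,
    state_fst, Function.comp_apply]

theorem chain_mem_Cmod {x : G'.EState →₀ ℤ} (hx : x ∈ G'.Cmod i j) :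
    φ.chain x ∈ G.Cmod (i + φ.shift) j := by
  refine map_mem_of_mem_Cmod (fun S hi hj => ?_) hx
  rw [chain_single]
  exact Finsupp.single_mem_supported ℤ 1 ⟨by rw [state_fst, card_edges, hi], by rw [jdeg_state, hj]⟩

theorem restrict_mem_Cmod {x : G.EState →₀ ℤ} (hx : x ∈ G.Cmod (i + φ.shift) j) :
    φ.restrict x ∈ G'.Cmod i j := by
  refine mem_Cmod_iff.2 fun S hS => ?_
  obtain ⟨hi, hj⟩ := mem_Cmod_iff.1 hx (φ.state S) hS
  rw [state_fst, card_edges] at hi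
  exact ⟨Nat.add_right_cancel hi, by rwa [← φ.jdeg_state]⟩

theorem restrict_eq_zero_of_lt_shift (hi : i < φ.shift) {x : G.EState →₀ ℤ}
    (hx : x ∈ G.Cmod i j) : φ.restrict x = 0 := by
  ext S
  by_contra hS
  have hcard := (mem_Cmod_iff.1 hx (φ.state S) hS).1
  rw [state_fst, card_edges] at hcard
  omega

end StateEmbedding

end OGraph

/-! ### Deletion and contraction -/

namespace OGraph

section LiftEdges

variable {n : ℕ} (e : Fin (n + 1))

/-- The edge set of `G` corresponding to an edge set of `G − e` or `G / e`. -/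
def liftEdges (s : Finset (Fin n)) : Finset (Fin (n + 1)) := s.map e.succAboveEmb

variable {e} in
theorem succAbove_mem_liftEdges {s : Finset (Fin n)} {k : Fin n} :
    e.succAbove k ∈ liftEdges e s ↔ k ∈ s :=
  Finset.mem_map' e.succAboveEmb

theorem notMem_liftEdges (s : Finset (Fin n)) : e ∉ liftEdges e s := by
  simp [liftEdges, Fin.succAbove_ne]

theorem liftEdges_injective : Function.Injective (liftEdges e) := Finset.map_injective _

theorem liftEdges_insert (k : Fin n) (s : Finset (Fin n)) :
    liftEdges e (insert k s) = insert (e.succAbove k) (liftEdges e s) :=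
  Finset.map_insert _ _ _

theorem insert_liftEdges_injective :
    Function.Injective fun s => insert e (liftEdges e s) := fun s t h =>
  liftEdges_injective e <| by
    simpa only [Finset.erase_insert (notMem_liftEdges e _)] using congrArg (·.erase e) h

variable {e}

theorem exists_liftEdges_eq {w : Finset (Fin (n + 1))} (he : e ∉ w) : ∃ s, liftEdges e s = w := by
  refine ⟨Finset.univ.filter (e.succAbove · ∈ w), Finset.ext fun f => ?_⟩
  rcases Fin.eq_self_or_eq_succAbove e f with rfl | ⟨k, rfl⟩
  · exact iff_of_false (notMem_liftEdges _ _) he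
  · simp [succAbove_mem_liftEdges]

theorem exists_insert_liftEdges_eq {w : Finset (Fin (n + 1))} (he : e ∈ w) :
    ∃ s, insert e (liftEdges e s) = w := by
  obtain ⟨s, hs⟩ := exists_liftEdges_eq (Finset.notMem_erase e w)
  exact ⟨s, by rw [hs, Finset.insert_erase he]⟩

theorem incidenceSign_liftEdges (k : Fin n) (s : Finset (Fin n)) :
    incidenceSign (e.succAbove k) (liftEdges e s) = incidenceSign k s := by
  simp only [incidenceSign, succAbove_mem_liftEdges]
  simp only [liftEdges, Finset.filter_map, Finset.card_map, Function.comp_def,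
    Fin.coe_succAboveEmb, Fin.succAbove_lt_succAbove_iff]

variable (e) in
/-- The sign with which adding `e` enters the differential of `G`. It is the discrepancy between
`C(G)` and the mapping cone of `EdgeSplitting.contractMap`. -/
def contractionSign (s : Finset (Fin n)) : ℤ := incidenceSign e (liftEdges e s)

theorem contractionSign_mul_self : contractionSign e * contractionSign e = 1 := by
  funext s
  rw [Pi.mul_apply, contractionSign, incidenceSign_of_notMem (notMem_liftEdges e s)]
  exact Int.units_coe_mul_self ((-1) ^ _)

theorem incidenceSign_insert_liftEdges_mul (k : Fin n) (s : Finset (Fin n)) :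
    incidenceSign (e.succAbove k) (insert e (liftEdges e s)) * contractionSign e s =
      -(contractionSign e (insert k s) * incidenceSign k s) := by
  rw [contractionSign, incidenceSign_insert_mul (Fin.succAbove_ne e k), incidenceSign_liftEdges,
    contractionSign, liftEdges_insert]

end LiftEdges

/-- The module spanned by the enhanced states of the graph with the given edges. -/
abbrev Chains {V : Type} [Fintype V] {n : ℕ} (ends : Fin n → Sym2 V) : Type :=
  (OGraph.mk V n ends).EState →₀ ℤ

/-- The relation of `G − e` and `G / e` to `G` as far as enhanced states are concerned: the states
of the former are the states of `G` avoiding `e`, those of the latter the ones containing `e`. The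
graphs are given by their edges, so that the first two visibly share the index type `Fin n`. -/
structure EdgeSplitting {V V₁ V₂ : Type} [Fintype V] [Fintype V₁] [Fintype V₂] {n : ℕ}
    (e : Fin (n + 1)) (ends₁ : Fin n → Sym2 V₁) (ends₂ : Fin n → Sym2 V₂)
    (ends : Fin (n + 1) → Sym2 V) where
  del : StateEmbedding ⟨V₁, n, ends₁⟩ ⟨V, n + 1, ends⟩
  ctr : StateEmbedding ⟨V₂, n, ends₂⟩ ⟨V, n + 1, ends⟩
  del_edges : ∀ s, del.edges s = liftEdges e s
  ctr_edges : ∀ s, ctr.edges s = insert e (liftEdges e s)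
  del_shift : del.shift = 0
  ctr_shift : ctr.shift = 1

namespace EdgeSplitting

open GradedDifferential

variable {V V₁ V₂ : Type} [Fintype V] [Fintype V₁] [Fintype V₂] {n : ℕ} {e : Fin (n + 1)}
  {ends₁ : Fin n → Sym2 V₁} {ends₂ : Fin n → Sym2 V₂} {ends : Fin (n + 1) → Sym2 V}
  (X : EdgeSplitting e ends₁ ends₂ ends)

theorem ctr_edges_insert (k : Fin n) (s : Finset (Fin n)) :
    X.ctr.edges (insert k s) = insert (e.succAbove k) (X.ctr.edges s) := by
  rw [ctr_edges, ctr_edges, liftEdges_insert, Finset.insert_comm]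

theorem del_edges_insert (k : Fin n) (s : Finset (Fin n)) :
    X.del.edges (insert k s) = insert (e.succAbove k) (X.del.edges s) := by
  rw [del_edges, del_edges, liftEdges_insert]

theorem del_edges_ne_ctr_edges (s t : Finset (Fin n)) : X.del.edges s ≠ X.ctr.edges t := by
  rw [del_edges, ctr_edges]
  exact fun h => notMem_liftEdges e s (h ▸ Finset.mem_insert_self e _)

theorem del_restrict_ctr_chain (y : Chains ends₂) :
    X.del.restrict (X.ctr.chain y) = 0 :=
  X.del.restrict_chain_eq_zero X.ctr X.del_edges_ne_ctr_edges y

theorem ctr_restrict_del_chain (x : Chains ends₁) :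
    X.ctr.restrict (X.del.chain x) = 0 :=
  X.ctr.restrict_chain_eq_zero X.del (fun s t => (X.del_edges_ne_ctr_edges t s).symm) x

theorem del_chain_restrict_add_ctr_chain_restrict (x : Chains ends) :
    X.del.chain (X.del.restrict x) + X.ctr.chain (X.ctr.restrict x) = x := by
  suffices X.del.chain ∘ₗ X.del.restrict + X.ctr.chain ∘ₗ X.ctr.restrict = LinearMap.id from
    LinearMap.congr_fun this x
  refine Finsupp.lhom_ext' fun W => LinearMap.ext_ring ?_
  simp only [LinearMap.comp_apply, LinearMap.add_apply, Finsupp.lsingle_apply, LinearMap.id_apply]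
  by_cases he : e ∈ W.1
  · obtain ⟨s, hs⟩ := exists_insert_liftEdges_eq he
    obtain ⟨S, rfl⟩ := X.ctr.exists_state_eq ((X.ctr_edges s).trans hs)
    rw [← StateEmbedding.chain_single, StateEmbedding.restrict_chain, del_restrict_ctr_chain,
      map_zero, zero_add]
  · obtain ⟨s, hs⟩ := exists_liftEdges_eq he
    obtain ⟨S, rfl⟩ := X.del.exists_state_eq ((X.del_edges s).trans hs)
    rw [← StateEmbedding.chain_single, StateEmbedding.restrict_chain, ctr_restrict_del_chain,
      map_zero, add_zero]

/-- The map `C(G − e) → C(G / e)` adding the edge `e`. -/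
noncomputable def contractMap : Chains ends₁ →ₗ[ℤ] Chains ends₂ :=
  X.ctr.restrict ∘ₗ mergeEdge (G := ⟨V, n + 1, ends⟩) e ∘ₗ X.del.chain

theorem contractMap_single (S : (OGraph.mk V₁ n ends₁).EState) :
    X.contractMap (Finsupp.single S 1) =
      X.ctr.restrict (merge (X.del.state S) (X.ctr.edges S.1)) := by
  rw [contractMap, LinearMap.comp_apply, LinearMap.comp_apply, StateEmbedding.chain_single,
    mergeEdge_single, StateEmbedding.state_fst, ctr_edges, del_edges]

theorem ctr_chain_contractMap (x : Chains ends₁) :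
    X.ctr.chain (X.contractMap x) = mergeEdge (G := ⟨V, n + 1, ends⟩) e (X.del.chain x) := by
  suffices X.ctr.chain ∘ₗ X.contractMap =
      mergeEdge (G := ⟨V, n + 1, ends⟩) e ∘ₗ X.del.chain from LinearMap.congr_fun this x
  refine Finsupp.lhom_ext' fun S => LinearMap.ext_ring ?_
  simp only [LinearMap.comp_apply, Finsupp.lsingle_apply, StateEmbedding.chain_single,
    mergeEdge_single, contractMap_single]
  rw [X.ctr.chain_restrict fun W hW => ⟨S.1, (fst_eq_of_merge_ne_zero hW).symm⟩,
    StateEmbedding.state_fst, ctr_edges, del_edges]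

theorem contractMap_mergeEdge (k : Fin n) (x : Chains ends₁) :
    X.contractMap (mergeEdge (G := ⟨V₁, n, ends₁⟩) k x) =
      mergeEdge (G := ⟨V₂, n, ends₂⟩) k (X.contractMap x) := by
  apply X.ctr.chain_injective
  rw [ctr_chain_contractMap, X.del.chain_mergeEdge (X.del_edges_insert k),
    X.ctr.chain_mergeEdge (X.ctr_edges_insert k), ctr_chain_contractMap, mergeEdge_comm]

theorem weight_contractMap (w : Finset (Fin n) → ℤ) (x : Chains ends₁) :
    weight (G := ⟨V₂, n, ends₂⟩) w (X.contractMap x) =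
      X.contractMap (weight (G := ⟨V₁, n, ends₁⟩) w x) := by
  suffices weight (G := ⟨V₂, n, ends₂⟩) w ∘ₗ X.contractMap =
      X.contractMap ∘ₗ weight (G := ⟨V₁, n, ends₁⟩) w from LinearMap.congr_fun this x
  refine Finsupp.lhom_ext' fun S => LinearMap.ext_ring ?_
  simp only [LinearMap.comp_apply, Finsupp.lsingle_apply, weight_single, map_smul,
    contractMap_single]
  exact weight_eq_smul
    (fun T hT => X.ctr.edges_injective (fst_eq_of_merge_ne_zero (T := X.ctr.state T) hT)) w

theorem isCochainMap_contractMap (j : ℕ) : IsCochainMap ((OGraph.mk V₁ n ends₁).cochains j)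
    ((OGraph.mk V₂ n ends₂).cochains j) X.contractMap where
  map_d x := by
    change X.contractMap (diff _ x) = diff _ (X.contractMap x)
    rw [diff_eq_sum, diff_eq_sum, map_sum]
    simp only [contractMap_mergeEdge, weight_contractMap]
  map_mem i x hx := by
    refine map_mem_of_mem_Cmod (fun S hi hj => ?_) hx
    rw [contractMap_single]
    apply X.ctr.restrict_mem_Cmod
    rw [← hi, ← X.ctr.card_edges, ← hj, ← X.del.jdeg_state]
    refine merge_mem_Cmod ?_
    rw [StateEmbedding.state_fst, del_edges, ctr_edges]
    exact Finset.subset_insert _ _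

/-- The inclusion of `C(G / e)`, shifted by one degree, into `C(G)`, with the signs that make it
anticommute with the differentials. -/
noncomputable def ctrIncl : Chains ends₂ →ₗ[ℤ] Chains ends :=
  X.ctr.chain ∘ₗ weight (G := ⟨V₂, n, ends₂⟩) (contractionSign e)

theorem diff_del_chain (a : Chains ends₁) :
    (OGraph.mk V (n + 1) ends).diff (X.del.chain a) =
      X.del.chain ((OGraph.mk V₁ n ends₁).diff a) + X.ctrIncl (X.contractMap a) := by
  have hsign (k : Fin n) : incidenceSign (e.succAbove k) ∘ X.del.edges = incidenceSign k :=
    funext fun s => by rw [Function.comp_apply, del_edges, incidenceSign_liftEdges]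
  have he : incidenceSign e ∘ X.del.edges = contractionSign e :=
    funext fun s => by rw [Function.comp_apply, del_edges, contractionSign]
  rw [ctrIncl, LinearMap.comp_apply, weight_contractMap, ctr_chain_contractMap,
    diff_eq_sum, diff_eq_sum, map_sum]
  refine ((Fin.sum_univ_succAbove _ e).trans (add_comm _ _)).trans ?_
  simp only [StateEmbedding.weight_chain, hsign, he, X.del.chain_mergeEdge (X.del_edges_insert _)]

theorem diff_ctrIncl (b : Chains ends₂) :
    (OGraph.mk V (n + 1) ends).diff (X.ctrIncl b) =
      -X.ctrIncl ((OGraph.mk V₂ n ends₂).diff b) := by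
  have hsign (k : Fin n) : (incidenceSign (e.succAbove k) ∘ X.ctr.edges) * contractionSign e =
      -((contractionSign e ∘ insert k) * incidenceSign k) :=
    funext fun s => by
      rw [Pi.mul_apply, Function.comp_apply, ctr_edges, incidenceSign_insert_liftEdges_mul]
      rfl
  have he : incidenceSign e ∘ X.ctr.edges = 0 :=
    funext fun s => incidenceSign_of_mem (X.ctr_edges s ▸ Finset.mem_insert_self _ _)
  rw [ctrIncl, LinearMap.comp_apply, LinearMap.comp_apply, diff_eq_sum, diff_eq_sum, map_sum,
    map_sum, ← Finset.sum_neg_distrib, Fin.sum_univ_succAbove _ e]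
  simp only [StateEmbedding.weight_chain, weight_weight, he, hsign, zero_mul, weight_zero, map_zero,
    zero_add, weight_neg (G := ⟨V₂, n, ends₂⟩), map_neg, weight_mergeEdge,
    X.ctr.chain_mergeEdge (X.ctr_edges_insert _)]

/-- `C(G) = C(G − e) ⊕ C(G / e)` as modules. -/
noncomputable def chainEquiv : (Chains ends₁ × Chains ends₂) ≃ₗ[ℤ] Chains ends :=
  LinearEquiv.ofLinearMap (X.del.chain.coprod X.ctrIncl)
    (X.del.restrict.prod (weight (G := ⟨V₂, n, ends₂⟩) (contractionSign e) ∘ₗ X.ctr.restrict))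
    (LinearMap.ext fun x => by
      simp [ctrIncl, weight_weight, contractionSign_mul_self, weight_one,
        del_chain_restrict_add_ctr_chain_restrict])
    (LinearMap.ext fun x => by
      simp [ctrIncl, weight_weight, contractionSign_mul_self, weight_one,
        StateEmbedding.restrict_chain, del_restrict_ctr_chain, ctr_restrict_del_chain])

/-- The mapping cone of `contractMap`. -/
noncomputable abbrev contractCone (j : ℕ) : GradedDifferential ℤ
    (Chains ends₁ × Chains ends₂) :=
  cone ((OGraph.mk V₁ n ends₁).cochains j) ((OGraph.mk V₂ n ends₂).cochains j) X.contractMap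

theorem isCochainMap_chainEquiv (j : ℕ) :
    IsCochainMap (X.contractCone j) ((OGraph.mk V (n + 1) ends).cochains j) X.chainEquiv where
  map_d := by
    rintro ⟨a, b⟩
    change X.del.chain (diff _ a) + X.ctrIncl (X.contractMap a - diff _ b) =
      diff _ (X.del.chain a + X.ctrIncl b)
    rw [map_add, diff_del_chain, diff_ctrIncl, map_sub]
    abel
  map_mem := by
    rintro i ⟨a, b⟩ ⟨ha, hb⟩
    have ha' := X.del.chain_mem_Cmod ha
    rw [X.del_shift] at ha'
    refine add_mem ha' ?_
    cases i with
    | zero =>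
      obtain rfl : b = 0 := hb
      exact (map_zero X.ctrIncl).symm ▸ zero_mem _
    | succ i =>
      have hb' := X.ctr.chain_mem_Cmod (weight_mem_Cmod (contractionSign e) hb)
      rwa [X.ctr_shift] at hb'

theorem isCochainMap_chainEquiv_symm (j : ℕ) :
    IsCochainMap ((OGraph.mk V (n + 1) ends).cochains j) (X.contractCone j) X.chainEquiv.symm := by
  refine (X.isCochainMap_chainEquiv j).symm fun i x hx =>
    ⟨X.del.restrict_mem_Cmod (X.del_shift.symm ▸ hx), ?_⟩
  cases i with
  | zero =>
    have hzero : X.ctr.restrict x = 0 :=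
      X.ctr.restrict_eq_zero_of_lt_shift (X.ctr_shift.symm ▸ zero_lt_one) hx
    exact (congrArg (weight _) hzero).trans (map_zero _)
  | succ i => exact weight_mem_Cmod _ (X.ctr.restrict_mem_Cmod (X.ctr_shift.symm ▸ hx))

/-- `H^{i,j}(G)` as the cohomology of the mapping cone. -/
noncomputable def hmodEquivCone (i j : ℕ) :
    (OGraph.mk V (n + 1) ends).Hmod i j ≃+ (X.contractCone j).Cohomology i :=
  (hmodEquiv _ i j).trans ((X.isCochainMap_chainEquiv_symm j).cohomologyEquiv
    (X.isCochainMap_chainEquiv j) i).toAddEquiv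

/-- The map `H^{i,j}(G) → H^{i,j}(G − e)` forgetting the states that contain `e`. -/
noncomputable def toDel (i j : ℕ) :
    (OGraph.mk V (n + 1) ends).Hmod i j →+ (OGraph.mk V₁ n ends₁).Hmod i j :=
  conjHom (X.hmodEquivCone i j) (hmodEquiv _ i j) (coneFst _ _ _ i).toAddMonoidHom

/-- The map `H^{i,j}(G − e) → H^{i,j}(G / e)` adding the edge `e`. -/
noncomputable def delToCtr (i j : ℕ) :
    (OGraph.mk V₁ n ends₁).Hmod i j →+ (OGraph.mk V₂ n ends₂).Hmod i j :=
  conjHom (hmodEquiv _ i j) (hmodEquiv _ i j)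
    ((X.isCochainMap_contractMap j).cohomologyMap i).toAddMonoidHom

/-- The connecting map `H^{i,j}(G / e) → H^{i+1,j}(G)` regarding states of `G / e` as states of `G`
that contain `e`. -/
noncomputable def ofCtr (i j : ℕ) :
    (OGraph.mk V₂ n ends₂).Hmod i j →+ (OGraph.mk V (n + 1) ends).Hmod (i + 1) j :=
  conjHom (hmodEquiv _ i j) (X.hmodEquivCone (i + 1) j) (coneInr _ _ _ i).toAddMonoidHom

theorem toDel_zero_injective (j : ℕ) : Function.Injective (X.toDel 0 j) :=
  conjHom_injective _ _ coneFst_zero_injective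

theorem exact_toDel_delToCtr (i j : ℕ) : Function.Exact (X.toDel i j) (X.delToCtr i j) :=
  exact_conjHom _ _ _ (exact_coneFst_cohomologyMap (X.isCochainMap_contractMap j) i)

theorem exact_delToCtr_ofCtr (i j : ℕ) : Function.Exact (X.delToCtr i j) (X.ofCtr i j) :=
  exact_conjHom _ _ _ (exact_cohomologyMap_coneInr (X.isCochainMap_contractMap j) i)

theorem exact_ofCtr_toDel (i j : ℕ) : Function.Exact (X.ofCtr i j) (X.toDel (i + 1) j) :=
  exact_conjHom _ _ _ (exact_coneInr_coneFst (X.isCochainMap_contractMap j) i)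

end EdgeSplitting

section DeletionContraction

variable {V : Type} [Fintype V] {n : ℕ} (ends : Fin (n + 1) → Sym2 V) (e : Fin (n + 1))

theorem compMk_delG_eq_iff (s : Finset (Fin n)) (u v : V) :
    (delG V ends e).compMk s u = (delG V ends e).compMk s v ↔
      (OGraph.mk V (n + 1) ends).compMk (liftEdges e s) u =
        (OGraph.mk V (n + 1) ends).compMk (liftEdges e s) v := by
  constructor <;> refine fun h => apply_eq_of_compMk_eq (fun k hk a b hab => ?_) h
  · exact compMk_eq_of_ends (succAbove_mem_liftEdges.2 hk) hab
  · obtain ⟨l, hl, rfl⟩ := Finset.mem_map.1 hk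
    exact compMk_eq_of_ends (G := delG V ends e) hl hab

theorem apply_eq_of_compMk_ctrG_eq {α : Type*} {g : V → α} {s : Finset (Fin n)} {u v : V}
    (he : ∀ a b, ends e = s(a, b) → g a = g b)
    (hs : ∀ k ∈ s, ∀ a b, ends (e.succAbove k) = s(a, b) → g a = g b)
    (h : (ctrG V ends e).compMk s (Quot.mk _ u) = (ctrG V ends e).compMk s (Quot.mk _ v)) :
    g u = g v := by
  refine apply_eq_of_compMk_eq (g := Quot.lift g he) (fun k hk a b hab => ?_) h
  change (ends (e.succAbove k)).map (Quot.mk _) = s(a, b) at hab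
  obtain ⟨⟨x, y⟩, hxy⟩ := Sym2.mk_surjective (ends (e.succAbove k))
  rw [← hxy] at hab
  rcases Sym2.eq_iff.1 hab with ⟨rfl, rfl⟩ | ⟨rfl, rfl⟩
  · exact hs k hk x y hxy.symm
  · exact (hs k hk x y hxy.symm).symm

theorem compMk_ctrG_eq_iff (s : Finset (Fin n)) (u v : V) :
    (ctrG V ends e).compMk s (Quot.mk _ u) = (ctrG V ends e).compMk s (Quot.mk _ v) ↔
      (OGraph.mk V (n + 1) ends).compMk (insert e (liftEdges e s)) u =
        (OGraph.mk V (n + 1) ends).compMk (insert e (liftEdges e s)) v := by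
  constructor
  · exact apply_eq_of_compMk_ctrG_eq ends e
      (fun _ _ => compMk_eq_of_ends (G := ⟨V, n + 1, ends⟩) (Finset.mem_insert_self _ _))
      fun _ hk _ _ => compMk_eq_of_ends (G := ⟨V, n + 1, ends⟩)
        (Finset.mem_insert_of_mem (succAbove_mem_liftEdges.2 hk))
  · refine apply_eq_of_compMk_eq (G := ⟨V, n + 1, ends⟩)
      (g := fun w => (ctrG V ends e).compMk s (Quot.mk _ w)) fun f hf a b hab => ?_
    rcases Finset.mem_insert.1 hf with rfl | hf
    · exact congrArg (compMk _ _) (Quot.sound hab)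
    · obtain ⟨k, hk, rfl⟩ := Finset.mem_map.1 hf
      exact compMk_eq_of_ends (G := ctrG V ends e) hk (congrArg (Sym2.map (Quot.mk _)) hab)

/-- The splitting of the states of `G` into those of `G − e` and `G / e`; the two graphs are `delG`
and `ctrG` spelled out. -/
def edgeSplitting : EdgeSplitting e (fun k => ends (e.succAbove k))
    (fun k => (ends (e.succAbove k)).map (Quot.mk fun u v => ends e = s(u, v))) ends where
  del :=
    { vert := id
      vert_surjective := Function.surjective_id
      edges := liftEdges e
      edges_injective := liftEdges_injective e
      compMk_eq_iff := compMk_delG_eq_iff ends e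
      shift := 0
      card_edges := fun _ => Finset.card_map _ }
  ctr :=
    { vert := Quot.mk _
      vert_surjective := Quot.exists_rep
      edges := fun s => insert e (liftEdges e s)
      edges_injective := insert_liftEdges_injective e
      compMk_eq_iff := compMk_ctrG_eq_iff ends e
      shift := 1
      card_edges := fun s => by
        rw [Finset.card_insert_of_notMem (notMem_liftEdges e s), liftEdges, Finset.card_map] }
  del_edges _ := rfl
  ctr_edges _ := rfl
  del_shift := rfl
  ctr_shift := rfl

end DeletionContraction

end OGraph

/-- deletion–contraction long exact sequence. For a graph `G`
and an edge `e` of `G`, there is a long exact sequence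
`0 → H^{0,j}(G) → H^{0,j}(G−e) → H^{0,j}(G/e) → H^{1,j}(G) → ⋯ →
H^{i,j}(G) → H^{i,j}(G−e) → H^{i,j}(G/e) → H^{i+1,j}(G) → ⋯`
of graph cohomology groups, categorifying the deletion–contraction rule. -/
theorem deletion_contraction_les (V : Type) [Fintype V] {n : ℕ}
    (ends : Fin (n + 1) → Sym2 V) (e : Fin (n + 1)) :
    ∃ (β : ∀ i j : ℕ, (OGraph.mk V (n + 1) ends).Hmod i j →+ (OGraph.delG V ends e).Hmod i j)
      (γ : ∀ i j : ℕ, (OGraph.delG V ends e).Hmod i j →+ (OGraph.ctrG V ends e).Hmod i j)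
      (α : ∀ i j : ℕ, (OGraph.ctrG V ends e).Hmod i j →+ (OGraph.mk V (n + 1) ends).Hmod (i + 1) j),
      (∀ j : ℕ, Function.Injective (β 0 j)) ∧
      (∀ i j : ℕ, Function.Exact (β i j) (γ i j)) ∧
      (∀ i j : ℕ, Function.Exact (γ i j) (α i j)) ∧
      (∀ i j : ℕ, Function.Exact (α i j) (β (i + 1) j)) := by
  let X := OGraph.edgeSplitting ends e
  exact ⟨X.toDel, X.delToCtr, X.ofCtr, X.toDel_zero_injective, X.exact_toDel_delToCtr,
    X.exact_delToCtr_ofCtr, X.exact_ofCtr_toDel⟩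
end

section
/- If a graph G contains a loop, then all graph cohomology groups of G vanish: H^i(G) = 0 for all i. -/
/-!
Adding or removing a loop `e` does not change the components of a spanning subgraph, so on enhanced
states adding `e` and erasing `e` are mutually inverse, and erasing `e` commutes with adding any
other edge. The map `h` sending a state `S ∋ e` to `± (S \ e)` and every other state to `0`
therefore satisfies `d h + h d = id`: the terms that add an edge other than `e` cancel in pairs,
because the edge signs anticommute, and the terms that add `e` give back the state.
-/

namespace OGraph

variable {G : OGraph}

section Components

/-- The map from the components of `[G:s]` to those of `[G:t]` induced by an inclusion `s ⊆ t`
of edge sets. -/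
def compMap {s t : Finset (Fin G.n)} (hst : s ⊆ t) : G.Comp s → G.Comp t :=
  qmap fun _ _ ⟨f, hf, hends⟩ => ⟨f, hst hf, hends⟩

variable {s t u : Finset (Fin G.n)}

theorem compMap_refl (k : G.Comp s) : compMap (Finset.Subset.refl s) k = k :=
  Quot.inductionOn k fun _ => rfl

theorem compMap_compMap (hst : s ⊆ t) (htu : t ⊆ u) (k : G.Comp s) :
    compMap htu (compMap hst k) = compMap (hst.trans htu) k :=
  Quot.inductionOn k fun _ => rfl

theorem compMap_surjective (hst : s ⊆ t) : Function.Surjective (compMap hst) :=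
  Quot.ind fun v => ⟨Quot.mk _ v, rfl⟩

theorem compMap_injective (hst : s ⊆ t) (hloop : ∀ f ∈ t, f ∉ s → (G.ends f).IsDiag) :
    Function.Injective (compMap hst) := by
  have mk_eq_mk_of_rel (v w : G.V) (hvw : G.rel t v w) :
      Quot.mk (G.rel s) v = Quot.mk (G.rel s) w := by
    obtain ⟨f, hft, hends⟩ := hvw
    by_cases hfs : f ∈ s
    · exact Quot.sound ⟨f, hfs, hends⟩
    · have hdiag := hloop f hft hfs
      rw [hends, Sym2.mk_isDiag_iff] at hdiag
      rw [hdiag]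
  exact Function.LeftInverse.injective (g := Quot.lift (Quot.mk (G.rel s)) mk_eq_mk_of_rel)
    (Quot.ind fun _ => rfl)

theorem compMap_injective_of_subset_insert {e : Fin G.n} (he : (G.ends e).IsDiag) (hst : s ⊆ t)
    (hts : t ⊆ insert e s) : Function.Injective (compMap hst) :=
  compMap_injective hst fun _ hft hfs =>
    (Finset.mem_insert.1 (hts hft)).elim (fun hfe => hfe ▸ he) fun hf => absurd hf hfs

end Components

section EnhancedStates

theorem EState.mk_eq_mk {s t : Finset (Fin G.n)} {a : G.Comp s → Prop} {b : G.Comp t → Prop}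
    (hst : s = t) (hab : ∀ k, a k ↔ b (compMap hst.subset k)) :
    (⟨s, a⟩ : G.EState) = ⟨t, b⟩ := by
  subst hst
  congr 1
  funext k
  simpa only [compMap_refl, eq_iff_iff] using hab k

/-- The enhanced state obtained from `S` by adding the edge `f`: a component is colored `x` when
it contains a component colored `x` in `S`. It agrees with `addEdge` when the latter is nonzero. -/
abbrev insertEdge (S : G.EState) (f : Fin G.n) : G.EState :=
  ⟨insert f S.1, fun K => ∃ k, compMap (Finset.subset_insert f S.1) k = K ∧ S.2 k⟩

/-- The enhanced state obtained from `S` by removing the edge `e`: a component is colored as the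
component of `S` that contains it. -/
abbrev eraseEdge (S : G.EState) (e : Fin G.n) : G.EState :=
  ⟨S.1.erase e, fun k => S.2 (compMap (Finset.erase_subset e S.1) k)⟩

/-- Adding the edge `f` to `S` merges two distinct components colored `x`, so that the product
of their colors is `x * x = 0`. -/
def Merges (S : G.EState) (f : Fin G.n) : Prop :=
  ∃ k₁ k₂ : G.Comp S.1, k₁ ≠ k₂ ∧
    compMap (Finset.subset_insert f S.1) k₁ = compMap (Finset.subset_insert f S.1) k₂ ∧
    S.2 k₁ ∧ S.2 k₂

theorem addEdge_of_mem {S : G.EState} {f : Fin G.n} (hf : f ∈ S.1) : G.addEdge S f = 0 :=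
  if_pos hf

theorem addEdge_of_merges {S : G.EState} {f : Fin G.n} (hS : Merges S f) :
    G.addEdge S f = 0 :=
  ite_eq_left_iff.2 fun _ => if_pos hS

theorem addEdge_of_not_merges {S : G.EState} {f : Fin G.n} (hf : f ∉ S.1) (hS : ¬ Merges S f) :
    G.addEdge S f = Finsupp.single (insertEdge S f) 1 :=
  (if_neg hf).trans (if_neg hS)

variable {S : G.EState} {e f : Fin G.n}

theorem insertEdge_eraseEdge (heS : e ∈ S.1) : insertEdge (eraseEdge S e) e = S := by
  obtain ⟨s, a⟩ := S
  refine EState.mk_eq_mk (Finset.insert_erase heS) fun K => ?_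
  have hsurj := compMap_surjective (Finset.subset_insert e (s.erase e))
  calc
    _ ↔ ∃ L, L = K ∧ a (compMap (Finset.insert_erase heS).subset L) := by
      simp only [hsurj.exists, compMap_compMap]
    _ ↔ _ := exists_eq_left

theorem eraseEdge_insertEdge (he : (G.ends e).IsDiag) (heS : e ∉ S.1) :
    eraseEdge (insertEdge S e) e = S := by
  obtain ⟨s, a⟩ := S
  have hinj : Function.Injective (compMap (Finset.subset_insert e s)) :=
    compMap_injective_of_subset_insert he _ subset_rfl
  refine EState.mk_eq_mk (Finset.erase_insert heS) fun k => ?_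
  simp only [insertEdge, ← compMap_compMap (Finset.erase_insert heS).subset
    (Finset.subset_insert e s), hinj.eq_iff, exists_eq_left]

theorem eraseEdge_insertEdge_comm (he : (G.ends e).IsDiag) (hfe : f ≠ e) :
    eraseEdge (insertEdge S f) e = insertEdge (eraseEdge S e) f := by
  obtain ⟨s, a⟩ := S
  have hset : (insert f s).erase e = insert f (s.erase e) := Finset.erase_insert_of_ne hfe
  have hsub : insert f (s.erase e) ⊆ insert f s :=
    Finset.insert_subset_insert f (Finset.erase_subset e s)
  have hinj : Function.Injective (compMap hsub) :=
    compMap_injective_of_subset_insert he hsub (by grind)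
  refine EState.mk_eq_mk hset fun K => ?_
  simp only [insertEdge, eraseEdge, (compMap_surjective (Finset.erase_subset e s)).exists,
    ← hinj.eq_iff, compMap_compMap]

theorem merges_eraseEdge_iff (he : (G.ends e).IsDiag) :
    Merges (eraseEdge S e) f ↔ Merges S f := by
  obtain ⟨s, a⟩ := S
  have hinj : Function.Injective (compMap (Finset.erase_subset e s)) :=
    compMap_injective_of_subset_insert he _ (Finset.insert_erase_subset e s)
  have hinjInsert : Function.Injective
      (compMap (Finset.insert_subset_insert f (Finset.erase_subset e s))) :=
    compMap_injective_of_subset_insert he _ (by grind)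
  simp only [Merges, eraseEdge, (compMap_surjective (Finset.erase_subset e s)).exists,
    hinj.ne_iff, ← hinjInsert.eq_iff, compMap_compMap]

theorem not_merges_of_isDiag (he : (G.ends e).IsDiag) : ¬ Merges S e := by
  rintro ⟨k₁, k₂, hne, heq, -⟩
  exact hne (compMap_injective_of_subset_insert he _ subset_rfl heq)

theorem addEdge_of_isDiag (he : (G.ends e).IsDiag) (heS : e ∉ S.1) :
    G.addEdge S e = Finsupp.single (insertEdge S e) 1 :=
  addEdge_of_not_merges heS (not_merges_of_isDiag he)

theorem jdeg_eraseEdge (he : (G.ends e).IsDiag) : G.jdeg (eraseEdge S e) = G.jdeg S := by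
  have hbij : Function.Bijective (compMap (Finset.erase_subset e S.1)) :=
    ⟨compMap_injective_of_subset_insert he _ (Finset.insert_erase_subset e S.1),
      compMap_surjective _⟩
  exact Nat.card_congr ((Equiv.ofBijective _ hbij).subtypeEquiv fun _ => Iff.rfl)

end EnhancedStates

section Signs

variable {α : Type*} [LinearOrder α]

/-- The sign `(-1)^{n(e)}`, with `n(e)` the number of elements of `s` before `e`, that the
differential attaches to adding the edge `e` to a state with edge set `s`. -/
def edgeSign (s : Finset α) (e : α) : ℤ :=
  (-1) ^ (s.filter fun f => f < e).card

variable {s : Finset α} {e f : α}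

theorem edgeSign_mul_self : edgeSign s e * edgeSign s e = 1 :=
  pow_mul_pow_eq_one _ (by norm_num)

theorem edgeSign_insert_of_lt (hf : f ∉ s) (hfe : f < e) :
    edgeSign (insert f s) e = -edgeSign s e := by
  have hf' : f ∉ s.filter fun g => g < e := fun h => hf (Finset.mem_of_mem_filter f h)
  simp only [edgeSign, Finset.filter_insert, if_pos hfe, Finset.card_insert_of_notMem hf', pow_succ,
    mul_neg_one]

theorem edgeSign_insert_of_le (hef : e ≤ f) : edgeSign (insert f s) e = edgeSign s e := by
  simp only [edgeSign, Finset.filter_insert, if_neg hef.not_gt]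

theorem edgeSign_erase_self : edgeSign (s.erase e) e = edgeSign s e := by
  rw [edgeSign, edgeSign, Finset.filter_erase, Finset.erase_eq_of_notMem (by simp)]

theorem edgeSign_anticomm (hes : e ∈ s) (hfs : f ∉ s) :
    edgeSign s f * edgeSign (insert f s) e = -(edgeSign s e * edgeSign (s.erase e) f) := by
  obtain ⟨t, het, rfl⟩ : ∃ t, e ∉ t ∧ insert e t = s :=
    ⟨s.erase e, Finset.notMem_erase e s, Finset.insert_erase hes⟩
  rw [Finset.erase_insert het]
  rcases lt_or_gt_of_ne (ne_of_mem_of_not_mem hes hfs) with hef | hfe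
  · rw [edgeSign_insert_of_lt het hef, edgeSign_insert_of_le hef.le]
    ring
  · rw [edgeSign_insert_of_le hfe.le, edgeSign_insert_of_lt hfs hfe]
    ring

end Signs

section Contraction

/-- The contracting homotopy attached to a loop `e`: it sends a state containing `e` to the signed
state with `e` removed, and every other state to zero. -/
noncomputable def loopContraction (e : Fin G.n) : (G.EState →₀ ℤ) →ₗ[ℤ] (G.EState →₀ ℤ) :=
  Finsupp.linearCombination ℤ fun S =>
    if e ∈ S.1 then edgeSign S.1 e • Finsupp.single (eraseEdge S e) 1 else 0

variable {S : G.EState} {e f : Fin G.n}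

theorem loopContraction_single_of_mem (heS : e ∈ S.1) :
    loopContraction e (Finsupp.single S 1) =
      edgeSign S.1 e • Finsupp.single (eraseEdge S e) 1 := by
  simp only [loopContraction, Finsupp.linearCombination_single, one_smul, if_pos heS]

theorem loopContraction_single_of_notMem (heS : e ∉ S.1) :
    loopContraction e (Finsupp.single S 1) = 0 := by
  simp only [loopContraction, Finsupp.linearCombination_single, one_smul, if_neg heS]

theorem diff_single (S : G.EState) :
    G.diff (Finsupp.single S 1) = ∑ f, edgeSign S.1 f • G.addEdge S f := by
  simp [diff, dState, edgeSign]

theorem loopContraction_addEdge_of_notMem (heS : e ∉ S.1) (hfe : f ≠ e) :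
    loopContraction e (G.addEdge S f) = 0 := by
  by_cases hfS : f ∈ S.1
  · rw [addEdge_of_mem hfS, map_zero]
  by_cases hmerges : Merges S f
  · rw [addEdge_of_merges hmerges, map_zero]
  rw [addEdge_of_not_merges hfS hmerges]
  exact loopContraction_single_of_notMem (Finset.mem_insert.not.2 (not_or.2 ⟨hfe.symm, heS⟩))

theorem loopContraction_addEdge_of_mem (he : (G.ends e).IsDiag) (heS : e ∈ S.1) (hfe : f ≠ e) :
    edgeSign S.1 f • loopContraction e (G.addEdge S f) =
      -(edgeSign S.1 e • edgeSign (S.1.erase e) f • G.addEdge (eraseEdge S e) f) := by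
  have hmem : f ∈ (eraseEdge S e).1 ↔ f ∈ S.1 := Finset.mem_erase.trans (and_iff_right hfe)
  by_cases hfS : f ∈ S.1
  · simp only [addEdge_of_mem hfS, addEdge_of_mem (hmem.2 hfS), map_zero, smul_zero, neg_zero]
  by_cases hmerges : Merges S f
  · simp only [addEdge_of_merges hmerges, addEdge_of_merges ((merges_eraseEdge_iff he).2 hmerges),
      map_zero, smul_zero, neg_zero]
  have heSf : e ∈ (insertEdge S f).1 := Finset.mem_insert_of_mem heS
  rw [addEdge_of_not_merges hfS hmerges,
    addEdge_of_not_merges (hmem.not.2 hfS) ((merges_eraseEdge_iff he).not.2 hmerges),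
    loopContraction_single_of_mem heSf, eraseEdge_insertEdge_comm he hfe, smul_smul, smul_smul,
    ← neg_smul, ← edgeSign_anticomm heS hfS]

theorem diff_loopContraction_add_loopContraction_diff_single_of_notMem (he : (G.ends e).IsDiag)
    (heS : e ∉ S.1) :
    G.diff (loopContraction e (Finsupp.single S 1)) +
      loopContraction e (G.diff (Finsupp.single S 1)) = Finsupp.single S 1 := by
  have hsign : edgeSign (insertEdge S e).1 e = edgeSign S.1 e := edgeSign_insert_of_le le_rfl
  calc
    _ = ∑ f, edgeSign S.1 f • loopContraction e (G.addEdge S f) := by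
      simp only [loopContraction_single_of_notMem heS, diff_single, map_zero, zero_add, map_sum,
        map_smul]
    _ = edgeSign S.1 e • loopContraction e (G.addEdge S e) :=
      Fintype.sum_eq_single e fun f hfe => by
        rw [loopContraction_addEdge_of_notMem heS hfe, smul_zero]
    _ = Finsupp.single S 1 := by
      rw [addEdge_of_isDiag he heS,
        loopContraction_single_of_mem (Finset.mem_insert_self e S.1), eraseEdge_insertEdge he heS,
        hsign, smul_smul, edgeSign_mul_self, one_smul]

theorem diff_loopContraction_add_loopContraction_diff_single_of_mem (he : (G.ends e).IsDiag)
    (heS : e ∈ S.1) :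
    G.diff (loopContraction e (Finsupp.single S 1)) +
      loopContraction e (G.diff (Finsupp.single S 1)) = Finsupp.single S 1 := by
  let T := eraseEdge S e
  let rest := Finset.univ.erase e
  have hdT : G.diff (Finsupp.single T 1) =
      edgeSign S.1 e • Finsupp.single S 1 +
        ∑ f ∈ rest, edgeSign T.1 f • G.addEdge T f := by
    rw [diff_single, ← Finset.add_sum_erase _ _ (Finset.mem_univ e),
      addEdge_of_isDiag he (Finset.notMem_erase e S.1), insertEdge_eraseEdge heS]
    congr 2
    exact edgeSign_erase_self
  have hhd : loopContraction e (G.diff (Finsupp.single S 1)) =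
      -(edgeSign S.1 e • ∑ f ∈ rest, edgeSign T.1 f • G.addEdge T f) := by
    rw [diff_single, ← Finset.add_sum_erase _ _ (Finset.mem_univ e), addEdge_of_mem heS,
      smul_zero, zero_add, map_sum, Finset.smul_sum, ← Finset.sum_neg_distrib]
    refine Finset.sum_congr rfl fun f hf => ?_
    rw [map_smul]
    exact loopContraction_addEdge_of_mem he heS (Finset.ne_of_mem_erase hf)
  rw [loopContraction_single_of_mem heS, map_smul, hdT, hhd, smul_add, smul_smul,
    edgeSign_mul_self, one_smul, add_neg_cancel_right]

theorem diff_loopContraction_add_loopContraction_diff (he : (G.ends e).IsDiag) :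
    G.diff ∘ₗ loopContraction e + loopContraction e ∘ₗ G.diff = LinearMap.id := by
  refine Finsupp.lhom_ext' fun S => LinearMap.ext_ring ?_
  by_cases heS : e ∈ S.1
  · exact diff_loopContraction_add_loopContraction_diff_single_of_mem he heS
  · exact diff_loopContraction_add_loopContraction_diff_single_of_notMem he heS

end Contraction

section Cohomology

variable {e : Fin G.n} {i j : ℕ}

theorem Cmod_le_of_single_mem {N : Submodule ℤ (G.EState →₀ ℤ)}
    (hN : ∀ S : G.EState, S.1.card = i → G.jdeg S = j → Finsupp.single S 1 ∈ N) :
    G.Cmod i j ≤ N := by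
  rw [Cmod, Finsupp.supported_eq_span_single, Submodule.span_le]
  rintro _ ⟨S, ⟨hi, hj⟩, rfl⟩
  exact hN S hi hj

theorem Cmod_zero_le_ker_loopContraction :
    G.Cmod 0 j ≤ LinearMap.ker (loopContraction e) :=
  Cmod_le_of_single_mem fun _ hcard _ =>
    loopContraction_single_of_notMem (Finset.card_eq_zero.1 hcard ▸ Finset.notMem_empty e)

theorem Cmod_succ_le_comap_loopContraction (he : (G.ends e).IsDiag) :
    G.Cmod (i + 1) j ≤ (G.Cmod i j).comap (loopContraction e) := by
  refine Cmod_le_of_single_mem fun S hcard hj => ?_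
  rw [Submodule.mem_comap]
  by_cases heS : e ∈ S.1
  · rw [loopContraction_single_of_mem heS]
    refine Submodule.smul_mem _ _ (Finsupp.single_mem_supported ℤ _ ⟨?_, ?_⟩)
    · exact Nat.succ_injective ((Finset.card_erase_add_one heS).trans hcard)
    · exact (jdeg_eraseEdge he).trans hj
  · rw [loopContraction_single_of_notMem heS]
    exact Submodule.zero_mem _

theorem Zmod_le_Bmod_of_isDiag (he : (G.ends e).IsDiag) : G.Zmod i j ≤ G.Bmod i j := by
  rintro z ⟨hdz, hz⟩
  have hdhz : G.diff (loopContraction e z) = z := by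
    have hhomotopy := LinearMap.congr_fun (diff_loopContraction_add_loopContraction_diff he) z
    simpa [LinearMap.mem_ker.1 hdz] using hhomotopy
  cases i with
  | zero =>
    have hhz : loopContraction e z = 0 := Cmod_zero_le_ker_loopContraction hz
    rw [hhz, map_zero] at hdhz
    exact hdhz.symm
  | succ i => exact ⟨loopContraction e z, Cmod_succ_le_comap_loopContraction he hz, hdhz⟩

theorem subsingleton_Hmod_iff : Subsingleton (G.Hmod i j) ↔ G.Zmod i j ≤ G.Bmod i j :=
  QuotientAddGroup.subsingleton_iff.trans AddSubgroup.addSubgroupOf_eq_top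

end Cohomology

end OGraph

/-- if `G` contains a loop (an edge whose two endpoints
coincide), then all graph cohomology groups of `G` vanish. -/
theorem cohomology_trivial_of_loop (G : OGraph) (e : Fin G.n)
    (he : (G.ends e).IsDiag) : ∀ i j : ℕ, Subsingleton (G.Hmod i j) :=
  fun _ _ => OGraph.subsingleton_Hmod_iff.2 (OGraph.Zmod_le_Bmod_of_isDiag he)
end
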